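/- Let (g_n) be the sequence of polynomials in ℤ[x] defined by g_0 = 1 and the recursion g_n(x) = Σ_{k=1}^{n} [n choose k]_x · (1-x^{n-k+1})(1-x^{n-k+2})···(1-x^{n-1}) · g_{n-k}(x) · x^{n-k} for n ≥ 1 (with the empty product equal to 1 when k = 1). Then every coefficient of every g_n is a nonnegative integer. -/

import Mathlib

/-!
The polynomial `g n` is the generating function of `inv σ + maj σ` over the permutations `σ` of `n`
letters, refined here by the last letter. Deleting the last letter and standardizing the rest gives
a recursion with manifestly nonnegative coefficients. Writing `F n j` for the refined generating
functions, so that `F n n = g n`, it can also be written with signs as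
`F (n+1) j = q^(n+1-j) * ((1 - q^(n+1)) * ∑_{i<j} F n i + q^(n+1) * F (n+1) (n+1))`.
Unrolling this in its first summand, each step being summed by the `q`-hockey-stick identity,
expands `F n j` in `F m m` for `m ≤ n`, and the sum of these expansions over all `j` is the
recursion that defines `g`.
-/

open PowerSeries Finset

/-- The Gaussian (q-binomial) polynomial `[n choose k]_x`, written as the element
`((1-x^{n-k+1})···(1-xⁿ)) / ((1-x)···(1-x^k))` of `ℤ⟦x⟧`. -/
noncomputable def gaussBinom (n k : ℕ) : PowerSeries ℤ :=
  (∏ i ∈ Finset.Icc (n - k + 1) n, (1 - PowerSeries.X ^ i)) *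
    Ring.inverse (∏ i ∈ Finset.Icc 1 k, (1 - PowerSeries.X ^ i : PowerSeries ℤ))

section Semiring

variable {R S : Type*} [Semiring R] [Semiring S]

/-- The `q`-binomial coefficient at an element `q` of a semiring, defined by the `q`-Pascal rule so
that no division is needed. -/
def qBinom (q : R) : ℕ → ℕ → R
  | _, 0 => 1
  | 0, _ + 1 => 0
  | n + 1, k + 1 => qBinom q n k + q ^ (k + 1) * qBinom q n (k + 1)

@[simp]
theorem qBinom_zero_right (q : R) (n : ℕ) : qBinom q n 0 = 1 := by
  rw [qBinom]

@[simp]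
theorem qBinom_zero_succ (q : R) (k : ℕ) : qBinom q 0 (k + 1) = 0 := by
  rw [qBinom]

theorem qBinom_succ_succ (q : R) (n k : ℕ) :
    qBinom q (n + 1) (k + 1) = qBinom q n k + q ^ (k + 1) * qBinom q n (k + 1) := by
  rw [qBinom]

-- The `q`-hockey-stick identity is the case `j = n + 1`.
theorem sum_range_pow_mul_qBinom (q : R) (k : ℕ) {n j : ℕ} (hj : j ≤ n + 1) :
    ∑ i ∈ range j, q ^ ((k + 1) * (n - i)) * qBinom q i k =
      q ^ ((k + 1) * (n + 1 - j)) * qBinom q j (k + 1) := by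
  induction j with
  | zero => simp
  | succ j ih =>
    have hsub : n + 1 - j = n - j + 1 := by lia
    rw [sum_range_succ, ih (by lia), qBinom_succ_succ, hsub, Nat.add_sub_add_right, mul_add_one,
      pow_add, mul_assoc, mul_add, add_comm]

theorem sum_range_sum_mul_pow_mul_qBinom (q : R) (c : ℕ → R) (m : ℕ) {n j : ℕ} (hj : j ≤ n + 1) :
    ∑ i ∈ range j, ∑ k ∈ range m, c k * (q ^ ((k + 1) * (n - i)) * qBinom q i k) =
      ∑ k ∈ range m, c k * (q ^ ((k + 1) * (n + 1 - j)) * qBinom q j (k + 1)) := by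
  rw [sum_comm]
  simp only [← mul_sum, sum_range_pow_mul_qBinom q _ hj]

/-- For `j ≤ n`, the generating function of `inv σ + maj σ` over the permutations `σ` of `n + 1`
letters whose last letter is the `j`-th smallest, counting from zero; other `j` carry no meaning.
A last letter that is the largest contributes nothing to `inv` and `maj`, so `j = n` gives the
generating function over all permutations of `n` letters.

For `n + 2` letters, the last one is in `n + 1 - j` inversions. If the one before it has rank `i`
once the last letter is deleted, they form a descent, contributing `n + 1` to `maj`, exactly when
`j ≤ i`. -/
def invMajLast (q : R) : ℕ → ℕ → R
  | 0, _ => 1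
  | n + 1, j => q ^ (n + 1 - j) *
      (∑ i ∈ range j, invMajLast q n i + q ^ (n + 1) * ∑ i ∈ Ico j (n + 1), invMajLast q n i)

theorem map_invMajLast (f : R →+* S) (q : R) (n j : ℕ) :
    f (invMajLast q n j) = invMajLast (f q) n j := by
  induction n generalizing j with
  | zero => simp only [invMajLast, map_one]
  | succ n ih => simp only [invMajLast, map_mul, map_add, map_sum, map_pow, ih]

theorem invMajLast_succ_self (q : R) (n : ℕ) :
    invMajLast q (n + 1) (n + 1) = ∑ i ∈ range (n + 1), invMajLast q n i := by
  simp [invMajLast]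

end Semiring

section CommRing

variable {R : Type*} [CommRing R] (q : R)

/-- The product `(1 - q^n)(1 - q^(n-1))⋯(1 - q^(n-k+1))`, a `q`-analogue of `Nat.descFactorial` not
normalized by `(1 - q)^k`. Truncated subtraction makes it vanish for `n < k`. -/
def qDescFactorial (n k : ℕ) : R :=
  ∏ i ∈ range k, (1 - q ^ (n - i))

@[simp]
theorem qDescFactorial_zero_right (n : ℕ) : qDescFactorial q n 0 = 1 :=
  prod_range_zero _

theorem qDescFactorial_succ_succ (n k : ℕ) :
    qDescFactorial q (n + 1) (k + 1) = (1 - q ^ (n + 1)) * qDescFactorial q n k := by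
  simp only [qDescFactorial, prod_range_succ', Nat.add_sub_add_right, Nat.sub_zero, mul_comm]

theorem qDescFactorial_eq_zero {n k : ℕ} (h : n < k) : qDescFactorial q n k = 0 :=
  prod_eq_zero (mem_range.mpr h) (by simp)

theorem pow_mul_qDescFactorial_succ (n k : ℕ) :
    q ^ k * qDescFactorial q n (k + 1) = (q ^ k - q ^ n) * qDescFactorial q n k := by
  obtain h | h := le_or_gt k n
  · rw [qDescFactorial, prod_range_succ, ← qDescFactorial, ← pow_mul_pow_sub q h]
    ring
  · rw [qDescFactorial_eq_zero q h, qDescFactorial_eq_zero q (h.trans k.lt_succ_self), mul_zero,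
      mul_zero]

theorem prod_Icc_one_sub_pow {n k : ℕ} (h : k ≤ n) :
    ∏ i ∈ Icc (n - k + 1) n, (1 - q ^ i) = qDescFactorial q n k := by
  obtain ⟨m, rfl⟩ := Nat.exists_eq_add_of_le' h
  rw [Nat.add_sub_cancel]
  clear h
  induction k with
  | zero => simp
  | succ k ih =>
    rw [← add_assoc, prod_Icc_succ_top (by lia), ih, qDescFactorial_succ_succ, mul_comm]

theorem qBinom_mul_qDescFactorial_self (n k : ℕ) :
    qBinom q n k * qDescFactorial q k k = qDescFactorial q n k := by
  induction n generalizing k with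
  | zero =>
    cases k with
    | zero => simp
    | succ k => rw [qBinom_zero_succ, zero_mul, qDescFactorial_eq_zero q k.succ_pos]
  | succ n ih =>
    cases k with
    | zero => simp
    | succ k =>
      have hsucc := ih (k + 1)
      rw [qDescFactorial_succ_succ] at hsucc
      rw [qBinom_succ_succ, qDescFactorial_succ_succ, qDescFactorial_succ_succ]
      linear_combination (1 - q ^ (k + 1)) * ih k + q ^ (k + 1) * hsucc +
        q * pow_mul_qDescFactorial_succ q n k

theorem invMajLast_succ {n j : ℕ} (hj : j ≤ n + 1) :
    invMajLast q (n + 1) j = q ^ (n + 1 - j) *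
      ((1 - q ^ (n + 1)) * ∑ i ∈ range j, invMajLast q n i +
        q ^ (n + 1) * invMajLast q (n + 1) (n + 1)) := by
  rw [invMajLast_succ_self, invMajLast, ← sum_range_add_sum_Ico _ hj]
  ring

theorem invMajLast_eq_sum {n j : ℕ} (hj : j ≤ n) :
    invMajLast q n j = ∑ k ∈ range (n + 1),
      qDescFactorial q n k * invMajLast q (n - k) (n - k) * q ^ (n - k) *
        (q ^ ((k + 1) * (n - j)) * qBinom q j k) := by
  induction n generalizing j with
  | zero => simp [invMajLast, Nat.le_zero.mp hj]
  | succ n ih =>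
    have hpartial : ∑ i ∈ range j, invMajLast q n i = ∑ k ∈ range (n + 1),
        qDescFactorial q n k * invMajLast q (n - k) (n - k) * q ^ (n - k) *
          (q ^ ((k + 1) * (n + 1 - j)) * qBinom q j (k + 1)) := by
      rw [← sum_range_sum_mul_pow_mul_qBinom q _ _ hj]
      exact sum_congr rfl fun i hi => ih (by have := mem_range.mp hi; lia)
    rw [invMajLast_succ q hj, sum_range_succ', hpartial, mul_add, mul_sum, mul_sum]
    congr 1
    · refine sum_congr rfl fun k _ => ?_
      rw [qDescFactorial_succ_succ, Nat.add_sub_add_right]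
      ring
    · simp only [qDescFactorial_zero_right, qBinom_zero_right, Nat.sub_zero]
      ring

theorem invMajLast_succ_self_eq_sum (n : ℕ) :
    invMajLast q (n + 1) (n + 1) = ∑ k ∈ range (n + 1),
      qBinom q (n + 1) (k + 1) * qDescFactorial q n k * invMajLast q (n - k) (n - k) *
        q ^ (n - k) := by
  calc invMajLast q (n + 1) (n + 1)
      = ∑ i ∈ range (n + 1), invMajLast q n i := invMajLast_succ_self q n
    _ = ∑ i ∈ range (n + 1), ∑ k ∈ range (n + 1),
          qDescFactorial q n k * invMajLast q (n - k) (n - k) * q ^ (n - k) *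
            (q ^ ((k + 1) * (n - i)) * qBinom q i k) :=
        sum_congr rfl fun _ hi => invMajLast_eq_sum q (mem_range_succ_iff.mp hi)
    _ = ∑ k ∈ range (n + 1),
          qDescFactorial q n k * invMajLast q (n - k) (n - k) * q ^ (n - k) *
            (q ^ ((k + 1) * (n + 1 - (n + 1))) * qBinom q (n + 1) (k + 1)) :=
        sum_range_sum_mul_pow_mul_qBinom q _ _ le_rfl
    _ = _ := by
        refine sum_congr rfl fun k _ => ?_
        rw [Nat.sub_self, mul_zero, pow_zero]
        ring

theorem eq_invMajLast_self_of_recurrence {g : ℕ → R} (hzero : g 0 = 1)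
    (hsucc : ∀ n, g (n + 1) = ∑ k ∈ range (n + 1),
      qBinom q (n + 1) (k + 1) * qDescFactorial q n k * g (n - k) * q ^ (n - k)) (n : ℕ) :
    g n = invMajLast q n n := by
  induction n using Nat.strong_induction_on with
  | _ n ih =>
    cases n with
    | zero => rw [hzero, invMajLast]
    | succ n =>
      rw [hsucc, invMajLast_succ_self_eq_sum]
      exact sum_congr rfl fun k _ => by rw [ih (n - k) (by lia)]

end CommRing

theorem isUnit_qDescFactorial_X {R : Type*} [CommRing R] {n k : ℕ} (h : k ≤ n) :
    IsUnit (qDescFactorial (X : R⟦X⟧) n k) := by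
  rw [isUnit_iff_constantCoeff, qDescFactorial, map_prod, prod_eq_one]
  · exact isUnit_one
  · intro i hi
    have hpos : n - i ≠ 0 := by have := mem_range.mp hi; lia
    simp [hpos]

theorem gaussBinom_eq_qBinom {n k : ℕ} (h : k ≤ n) : gaussBinom n k = qBinom X n k := by
  have hfact := prod_Icc_one_sub_pow (X : ℤ⟦X⟧) (le_refl k)
  rw [Nat.sub_self, zero_add] at hfact
  rw [gaussBinom, prod_Icc_one_sub_pow X h, hfact, eq_comm,
    Ring.eq_mul_inverse_iff_mul_eq _ _ _ (isUnit_qDescFactorial_X le_rfl),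
    qBinom_mul_qDescFactorial_self]

theorem coeff_invMajLast_X_nonneg (n j i : ℕ) :
    0 ≤ coeff i (invMajLast (X : ℤ⟦X⟧) n j) := by
  rw [← map_X (Nat.castRingHom ℤ), ← map_invMajLast, coeff_map]
  exact Int.natCast_nonneg _

/-- If g₀ = 1 and gₙ(x) = Σ_{k=1}^{n} [n choose k]_x ·
(1-x^{n-k+1})···(1-x^{n-1}) · g_{n-k}(x) · x^{n-k}, then every coefficient of
every gₙ is nonnegative. -/
theorem g_coeff_nonneg (g : ℕ → Polynomial ℤ) (hg0 : g 0 = 1)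
    (hg : ∀ n, 1 ≤ n →
      (g n : PowerSeries ℤ) =
        ∑ k ∈ Finset.Icc 1 n,
          gaussBinom n k *
            (∏ j ∈ Finset.Icc (n - k + 1) (n - 1), (1 - PowerSeries.X ^ j)) *
            (g (n - k) : PowerSeries ℤ) * PowerSeries.X ^ (n - k)) :
    ∀ n i, 0 ≤ (g n).coeff i := by
  have hzero : (g 0 : ℤ⟦X⟧) = 1 := by rw [hg0, Polynomial.coe_one]
  have hsucc (n : ℕ) : (g (n + 1) : ℤ⟦X⟧) = ∑ k ∈ range (n + 1),
      qBinom X (n + 1) (k + 1) * qDescFactorial X n k * (g (n - k) : ℤ⟦X⟧) * X ^ (n - k) := by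
    rw [hg (n + 1) n.succ_pos, ← Ico_add_one_right_eq_Icc, range_eq_Ico, ← sum_Ico_add' _ 0 _ 1]
    refine sum_congr rfl fun k hk => ?_
    have hkn : k ≤ n := Nat.lt_succ_iff.mp (mem_Ico.mp hk).2
    rw [gaussBinom_eq_qBinom (Nat.succ_le_succ hkn), Nat.add_sub_add_right, Nat.add_sub_cancel,
      prod_Icc_one_sub_pow X hkn]
  intro n i
  rw [← Polynomial.coeff_coe,
    eq_invMajLast_self_of_recurrence (g := fun m => (g m : ℤ⟦X⟧)) X hzero hsucc n]
  exact coeff_invMajLast_X_nonneg n n i
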